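/- arXiv:2508.12446 — 7 statements merged into one kernel-verified Lean document; each statement's English description precedes it below -/
import Mathlib

section
/- Let p ≥ 2 and let T = T_1 × ⋯ × T_p ⊂ ℝ^p where each T_j ⊂ ℝ is compact with positive Lebesgue measure. Let g be a measurable probability density with g(x) > 0 for all x ∈ T and ∫_T g = 1. Suppose two parameter tuples (π, α, u_1, …, u_p) and (π̃, α̃, ũ_1, …, ũ_p), with π, π̃ ∈ (0,1), α, α̃ ∈ ℝ, and bounded measurable u_j, ũ_j : T_j → ℝ satisfying the centering constraints ∫_{T_j} u_j(x_j) dx_j = 0 and ∫_{T_j} ũ_j(x_j) dx_j = 0, are such that h(x) := g(x)·exp(−α − Σ_{j=1}^p u_j(x_j)) and h̃(x) := g(x)·exp(−α̃ − Σ_{j=1}^p ũ_j(x_j)) are both probability densities on T (i.e., ∫_T h = ∫_T h̃ = 1). If π g(x) + (1−π) h(x) = π̃ g(x) + (1−π̃) h̃(x) for Lebesgue-almost every x ∈ T, and there exist two distinct indices j ≠ k such that u_j is not almost-everywhere constant on T_j and u_k is not almost-everywhere constant on T_k, then π = π̃, α = α̃, and u_j = ũ_j Lebesgue-almost everywhere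 on T_j for every j = 1, …, p. -/
open MeasureTheory

theorem ae_update_pi {p : ℕ} (μ : Fin p → Measure ℝ) [∀ i, IsFiniteMeasure (μ i)]
    (P : (Fin p → ℝ) → Prop) (hP : ∀ᵐ x ∂(Measure.pi μ), P x) (i : Fin p) :
    ∀ᵐ x ∂(Measure.pi μ), ∀ᵐ t ∂(μ i), P (Function.update x i t) := by
  classical
  obtain ⟨N, hN, hNm, hN0⟩ := exists_measurable_superset_of_null (ae_iff.1 hP)
  set f : (Fin p → ℝ) → ENNReal := N.indicator 1 with hf
  have hfm : Measurable f := measurable_one.indicator hNm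
  have hf0 : ∫⁻ x, f x ∂(Measure.pi μ) = 0 := by
    rw [hf, lintegral_indicator_one hNm, hN0]
  set F : (Fin p → ℝ) → ENNReal := fun x => ∫⁻ t, f (Function.update x i t) ∂(μ i) with hF
  have hFeq : F = lmarginal μ {i} f := by
    rw [lmarginal_singleton]
  have hFm : Measurable F := by
    rw [hFeq]; exact hfm.lmarginal μ
  have h1 : ∀ x, lmarginal μ (Finset.univ.erase i) F x = 0 := by
    intro x
    have := lmarginal_erase' (μ := μ) f hfm (Finset.mem_univ i)
    rw [lmarginal_univ, hf0] at this
    exact (congrFun this x).symm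
  have hF0 : ∫⁻ x, F x ∂(Measure.pi μ) = 0 := by
    rw [lintegral_eq_lmarginal_univ (fun _ => 0),
      lmarginal_erase (μ := μ) F hFm (Finset.mem_univ i)]
    simp [h1]
  rw [lintegral_eq_zero_iff hFm] at hF0
  filter_upwards [hF0] with x hx
  have hm : Measurable fun t => f (Function.update x i t) :=
    hfm.comp (measurable_update x)
  have hx' : ∫⁻ t, f (Function.update x i t) ∂(μ i) = 0 := hx
  rw [lintegral_eq_zero_iff hm] at hx'
  filter_upwards [hx'] with t ht
  by_contra hc
  have : Function.update x i t ∈ N := hN hc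
  simp [hf, this] at ht

theorem sum_update_eq {p : ℕ} (u : Fin p → ℝ → ℝ) (x : Fin p → ℝ) (j : Fin p) (s : ℝ) :
    ∑ i, u i (Function.update x j s i) = u j s + (∑ i, u i (x i) - u j (x j)) := by
  rw [← Finset.add_sum_erase _ _ (Finset.mem_univ j),
    ← Finset.add_sum_erase Finset.univ (fun i => u i (x i)) (Finset.mem_univ j)]
  simp only [Function.update_self, add_sub_cancel_left, add_right_inj]
  apply Finset.sum_congr rfl
  intro i hi
  rw [Function.update_of_ne (Finset.ne_of_mem_erase hi)]

/-- Identifiability of the generalized additive exponential tilting (GAET) model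
for `p ≥ 2` continuous features. -/
theorem gaet_identifiability
    (p : ℕ) (hp : 2 ≤ p)
    (T : Fin p → Set ℝ)
    (hTcompact : ∀ j, IsCompact (T j))
    (hTpos : ∀ j, 0 < volume (T j))
    (g : (Fin p → ℝ) → ℝ)
    (hg_meas : Measurable g)
    (hg_pos : ∀ x ∈ Set.univ.pi T, 0 < g x)
    (hg_int : ∫ x in Set.univ.pi T, g x = 1)
    (π π' α α' : ℝ)
    (hπ : π ∈ Set.Ioo (0:ℝ) 1) (hπ' : π' ∈ Set.Ioo (0:ℝ) 1)
    (u u' : Fin p → ℝ → ℝ)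
    (hu_meas : ∀ j, Measurable (u j)) (hu'_meas : ∀ j, Measurable (u' j))
    (hu_bdd : ∀ j, ∃ C : ℝ, ∀ x ∈ T j, |u j x| ≤ C)
    (hu'_bdd : ∀ j, ∃ C : ℝ, ∀ x ∈ T j, |u' j x| ≤ C)
    (hu_cent : ∀ j, ∫ x in T j, u j x = 0)
    (hu'_cent : ∀ j, ∫ x in T j, u' j x = 0)
    (h h' : (Fin p → ℝ) → ℝ)
    (hh_def : ∀ x, h x = g x * Real.exp (-α - ∑ j, u j (x j)))
    (hh'_def : ∀ x, h' x = g x * Real.exp (-α' - ∑ j, u' j (x j)))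
    (hh_int : ∫ x in Set.univ.pi T, h x = 1)
    (hh'_int : ∫ x in Set.univ.pi T, h' x = 1)
    (hmix : ∀ᵐ x ∂(volume.restrict (Set.univ.pi T)),
      π * g x + (1 - π) * h x = π' * g x + (1 - π') * h' x)
    (j k : Fin p) (hjk : j ≠ k)
    (huj : ¬ ∃ c : ℝ, ∀ᵐ x ∂(volume.restrict (T j)), u j x = c)
    (huk : ¬ ∃ c : ℝ, ∀ᵐ x ∂(volume.restrict (T k)), u k x = c) :
    π = π' ∧ α = α' ∧
      ∀ j : Fin p, ∀ᵐ x ∂(volume.restrict (T j)), u j x = u' j x := by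
  classical
  have hTm : ∀ i, MeasurableSet (T i) := fun i => (hTcompact i).measurableSet
  set μ : Fin p → Measure ℝ := fun i => volume.restrict (T i) with hμ
  have hfin : ∀ i, IsFiniteMeasure (μ i) := fun i =>
    ⟨by simpa [hμ] using (hTcompact i).measure_lt_top⟩
  have hne : ∀ i, NeZero (μ i) := fun i =>
    ⟨by rw [hμ]; simpa [Measure.restrict_eq_zero] using (hTpos i).ne'⟩
  have hpi : (volume : Measure (Fin p → ℝ)).restrict (Set.univ.pi T) = Measure.pi μ := by
    rw [volume_pi, Measure.restrict_pi_pi]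
  have hnepi : NeZero (Measure.pi μ) := by
    refine ⟨fun h0 => ?_⟩
    have h1 : Measure.pi μ Set.univ = 0 := by rw [h0]; rfl
    rw [Measure.pi_univ, Finset.prod_eq_zero_iff] at h1
    obtain ⟨i, -, hi⟩ := h1
    exact (hne i).out (Measure.measure_univ_eq_zero.1 hi)
  have hP : ∀ᵐ x ∂(Measure.pi μ),
      π + (1 - π) * Real.exp (-α - ∑ j, u j (x j)) =
        π' + (1 - π') * Real.exp (-α' - ∑ j, u' j (x j)) := by
    rw [← hpi]
    filter_upwards [hmix, ae_restrict_mem (MeasurableSet.univ_pi hTm)] with x hx hxT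
    rw [hh_def, hh'_def] at hx
    have := hg_pos x hxT
    apply mul_left_cancel₀ this.ne'
    linarith
  obtain ⟨hπ0, hπ1⟩ := hπ
  obtain ⟨hπ'0, hπ'1⟩ := hπ'
  have hc : π = π' := by
    by_contra hc
    obtain ⟨x, hx⟩ := (ae_update_pi μ _ (ae_update_pi μ _ hP j) k).exists
    simp only [sum_update_eq, Function.update_of_ne hjk] at hx
    obtain ⟨t1, ht1⟩ := hx.exists
    have hfr : ∃ᵐ t ∂(μ k), u k t ≠ u k t1 := by
      intro hcon
      exact huk ⟨u k t1, hcon.mono fun t ht => not_not.1 ht⟩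
    obtain ⟨t2, hne2, ht2⟩ := (hfr.and_eventually hx).exists
    set R := α + (∑ i, u i (x i) - u k (x k)) - u j (x j) with hR
    set R' := α' + (∑ i, u' i (x i) - u' k (x k)) - u' j (x j) with hR'
    have e1 : ∀ s t, Real.exp (-α - (u j s + (u k t + (∑ i, u i (x i) - u k (x k)) - u j (x j))))
        = Real.exp (-R) * Real.exp (-u k t) * Real.exp (-u j s) := by
      intro s t
      rw [← Real.exp_add, ← Real.exp_add]; congr 1; rw [hR]; ring
    have e2 : ∀ s t, Real.exp (-α' - (u' j s + (u' k t + (∑ i, u' i (x i) - u' k (x k)) - u' j (x j))))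
        = Real.exp (-R') * Real.exp (-u' k t) * Real.exp (-u' j s) := by
      intro s t
      rw [← Real.exp_add, ← Real.exp_add]; congr 1; rw [hR']; ring
    simp only [e1, e2] at ht1 ht2
    have hf : Real.exp (-u k t2) ≠ Real.exp (-u k t1) := by
      intro h; apply hne2; have := Real.exp_injective h; linarith
    have hD : 0 < (1 - π) * Real.exp (-R) := mul_pos (by linarith) (Real.exp_pos _)
    have hD' : 0 < (1 - π') * Real.exp (-R') := mul_pos (by linarith) (Real.exp_pos _)
    have p1 := Real.exp_pos (-u k t1)
    have p1' := Real.exp_pos (-u' k t1)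
    have q1 : ∀ s, 0 < Real.exp (-u j s) := fun s => Real.exp_pos _
    generalize Real.exp (-u k t1) = f1 at *
    generalize Real.exp (-u k t2) = f2 at *
    generalize Real.exp (-u' k t1) = f1' at *
    generalize Real.exp (-u' k t2) = f2' at *
    set D := (1 - π) * Real.exp (-R) with hDd
    set D' := (1 - π') * Real.exp (-R') with hDd'
    have key : ∀ᵐ s ∂(μ j), Real.exp (-u j s) * (D * D' * (f1 * f2' - f2 * f1'))
        = (π' - π) * (D' * (f2' - f1')) := by
      filter_upwards [ht1, ht2] with s h1 h2
      rw [hDd, hDd']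
      linear_combination (1 - π') * Real.exp (-R') * f2' * h1 - (1 - π') * Real.exp (-R') * f1' * h2
    have hcc : π' - π ≠ 0 := fun h => hc (by linarith)
    by_cases hΔ : f1 * f2' - f2 * f1' = 0
    · obtain ⟨s, hs⟩ := key.exists
      rw [hΔ, mul_zero, mul_zero] at hs
      have h3 : f2' - f1' = 0 := by
        have := hs.symm
        simpa [hcc, hD'.ne'] using this
      have h4 : (f1 - f2) * f1' = 0 := by
        linear_combination hΔ - f1 * h3
      rcases mul_eq_zero.1 h4 with h5 | h5
      · exact hf (by linarith)
      · exact p1'.ne' h5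
    · have hΔ' : D * D' * (f1 * f2' - f2 * f1') ≠ 0 :=
        mul_ne_zero (mul_pos hD hD').ne' hΔ
      refine huj ⟨-Real.log ((π' - π) * (D' * (f2' - f1')) / (D * D' * (f1 * f2' - f2 * f1'))), ?_⟩
      filter_upwards [key] with s hs
      rw [← hs, mul_div_cancel_right₀ _ hΔ', Real.log_exp, neg_neg]
  subst hc
  have hQ : ∀ᵐ x ∂(Measure.pi μ), α + ∑ j, u j (x j) = α' + ∑ j, u' j (x j) := by
    filter_upwards [hP] with x hx
    have h1 : (1 - π) ≠ 0 := by linarith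
    have := Real.exp_injective (mul_left_cancel₀ h1 (add_left_cancel hx))
    linarith
  have hall : ∀ i : Fin p, ∀ᵐ x ∂(volume.restrict (T i)), u i x = u' i x := by
    intro i
    obtain ⟨x, hx⟩ := (ae_update_pi μ _ hQ i).exists
    simp only [sum_update_eq] at hx
    have hint : ∀ v : ℝ → ℝ, Measurable v → (∃ C : ℝ, ∀ x ∈ T i, |v x| ≤ C) →
        Integrable v (μ i) := by
      rintro v hv ⟨C, hC⟩
      refine Integrable.of_bound hv.aestronglyMeasurable C ?_
      filter_upwards [ae_restrict_mem (hTm i)] with y hy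
      exact hC y hy
    obtain ⟨d, hd⟩ : ∃ d : ℝ, ∀ᵐ t ∂(μ i), u i t - u' i t = d := by
      refine ⟨α' + (∑ i, u' i (x i) - u' i (x i)) - (α + (∑ i, u i (x i) - u i (x i))), ?_⟩
      filter_upwards [hx] with t ht
      linarith
    have h1 : ∫ t, (u i t - u' i t) ∂(μ i) = 0 := by
      rw [integral_sub (hint _ (hu_meas i) (hu_bdd i)) (hint _ (hu'_meas i) (hu'_bdd i))]
      simp only [hμ, hu_cent, hu'_cent, sub_zero]
    rw [integral_congr_ae hd, integral_const, smul_eq_mul] at h1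
    have h2 : (μ i).real Set.univ ≠ 0 := by
      rw [measureReal_ne_zero_iff]
      exact fun h => (hne i).out (Measure.measure_univ_eq_zero.1 h)
    have h3 : d = 0 := (mul_eq_zero.1 h1).resolve_left h2
    filter_upwards [hd] with t ht
    linarith
  refine ⟨rfl, ?_, hall⟩
  have hall' : ∀ᵐ x ∂(Measure.pi μ), ∀ i, u i (x i) = u' i (x i) := by
    rw [ae_all_iff]
    intro i
    exact (Measure.quasiMeasurePreserving_eval μ i).ae (hall i)
  obtain ⟨x, hx1, hx2⟩ := (hQ.and hall').exists
  rw [Finset.sum_congr rfl (fun i _ => hx2 i)] at hx1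
  linarith
end

section
/- Let p ≥ 2 and let T_1, …, T_p be nonempty finite sets, T = T_1 × ⋯ × T_p. Let g : T → (0, ∞) be a probability mass function (Σ_{x∈T} g(x) = 1). Suppose two parameter tuples (π, α, u_1, …, u_p) and (π̃, α̃, ũ_1, …, ũ_p), with π, π̃ ∈ (0,1), α, α̃ ∈ ℝ, and functions u_j, ũ_j : T_j → ℝ satisfying the discrete centering constraints Σ_{t∈T_j} u_j(t) = 0 and Σ_{t∈T_j} ũ_j(t) = 0, are such that h(x) := g(x)·exp(−α − Σ_{j=1}^p u_j(x_j)) and h̃(x) := g(x)·exp(−α̃ − Σ_{j=1}^p ũ_j(x_j)) are both probability mass functions on T. If π g(x) + (1−π) h(x) = π̃ g(x) + (1−π̃) h̃(x) for every x ∈ T, and there exist two distinct indices j ≠ k such that |T_j| > 1, |T_k| > 1, and u_j and u_k are not constant functions, then π = π̃, α = α̃, and u_j = ũ_j for every j = 1, …, p. -/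
theorem gaet_sum_update {p : ℕ} {T : Fin p → Type*} (u : ∀ j, T j → ℝ) (x : ∀ j, T j)
    (i : Fin p) (t : T i) :
    ∑ l, u l (Function.update x i t l) = ∑ l, u l (x l) + (u i t - u i (x i)) := by
  rw [← Finset.add_sum_erase Finset.univ _ (Finset.mem_univ i),
    ← Finset.add_sum_erase Finset.univ (fun l => u l (x l)) (Finset.mem_univ i)]
  have : ∑ l ∈ Finset.univ.erase i, u l (Function.update x i t l)
      = ∑ l ∈ Finset.univ.erase i, u l (x l) := by
    apply Finset.sum_congr rfl
    intro l hl
    rw [Function.update_of_ne (Finset.ne_of_mem_erase hl)]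
  rw [this, Function.update_self]
  ring

theorem gaet_exists_ne {A : Type*} [Nonempty A] (f : A → ℝ) (hf : ¬ ∃ c : ℝ, ∀ t, f t = c) (a : A) :
    ∃ b, f b ≠ f a := by
  by_contra hc
  push Not at hc
  exact hf ⟨f a, hc⟩

/-- Identifiability of the GAET model with discrete (finite) features, `p ≥ 2`. -/
theorem gaet_identifiability_discrete
    (p : ℕ) (hp : 2 ≤ p)
    (T : Fin p → Type*) [∀ j, Fintype (T j)] [∀ j, Nonempty (T j)]
    (g : (∀ j, T j) → ℝ)
    (hg_pos : ∀ x, 0 < g x)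
    (hg_sum : ∑ x, g x = 1)
    (π π' α α' : ℝ)
    (hπ : π ∈ Set.Ioo (0:ℝ) 1) (hπ' : π' ∈ Set.Ioo (0:ℝ) 1)
    (u u' : ∀ j, T j → ℝ)
    (hu_cent : ∀ j, ∑ t, u j t = 0)
    (hu'_cent : ∀ j, ∑ t, u' j t = 0)
    (h h' : (∀ j, T j) → ℝ)
    (hh_def : ∀ x, h x = g x * Real.exp (-α - ∑ j, u j (x j)))
    (hh'_def : ∀ x, h' x = g x * Real.exp (-α' - ∑ j, u' j (x j)))
    (hh_sum : ∑ x, h x = 1)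
    (hh'_sum : ∑ x, h' x = 1)
    (hmix : ∀ x, π * g x + (1 - π) * h x = π' * g x + (1 - π') * h' x)
    (j k : Fin p) (hjk : j ≠ k)
    (hcardj : 1 < Fintype.card (T j))
    (hcardk : 1 < Fintype.card (T k))
    (huj : ¬ ∃ c : ℝ, ∀ t, u j t = c)
    (huk : ¬ ∃ c : ℝ, ∀ t, u k t = c) :
    π = π' ∧ α = α' ∧ ∀ j : Fin p, ∀ t : T j, u j t = u' j t := by
  have key : ∀ x : (∀ j, T j), π + (1 - π) * Real.exp (-α - ∑ j, u j (x j))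
      = π' + (1 - π') * Real.exp (-α' - ∑ j, u' j (x j)) := by
    intro x
    have h1 := hmix x
    rw [hh_def, hh'_def] at h1
    apply mul_left_cancel₀ (hg_pos x).ne'
    linarith
  obtain ⟨x⟩ : Nonempty (∀ j, T j) := inferInstance
  have hpi : π = π' := by
    obtain ⟨b, hb⟩ := gaet_exists_ne (u j) huj (x j)
    obtain ⟨c, hc⟩ := gaet_exists_ne (u k) huk (x k)
    have k0 := key x
    have k1 := key (Function.update x j b)
    have k2 := key (Function.update x k c)
    have k3 := key (Function.update (Function.update x j b) k c)
    simp only [gaet_sum_update, Function.update_of_ne hjk.symm] at k1 k2 k3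
    have e1 : ∀ a s v : ℝ, Real.exp (-a - (s + v)) = Real.exp (-a - s) * Real.exp (-v) := by
      intro a s v
      rw [← Real.exp_add]
      ring_nf
    simp only [e1] at k1 k2 k3
    have hP : Real.exp (-(u j b - u j (x j))) ≠ 1 := by
      intro h1
      rw [Real.exp_eq_one_iff] at h1
      exact hb (by linarith)
    have hQ : Real.exp (-(u k c - u k (x k))) ≠ 1 := by
      intro h1
      rw [Real.exp_eq_one_iff] at h1
      exact hc (by linarith)
    have hE := (Real.exp_pos (-α - ∑ j, u j (x j))).ne'
    have hA : (1 - π) ≠ 0 := by linarith [hπ.2]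
    generalize Real.exp (-(u j b - u j (x j))) = P at *
    generalize Real.exp (-(u k c - u k (x k))) = Q at *
    generalize Real.exp (-(u' j b - u' j (x j))) = P' at *
    generalize Real.exp (-(u' k c - u' k (x k))) = Q' at *
    generalize Real.exp (-α - ∑ j, u j (x j)) = E at *
    generalize Real.exp (-α' - ∑ j, u' j (x j)) = E' at *
    have f0 : (1 - π') * E' = (1 - π) * E + (π - π') := by linarith
    have f1 : (1 - π') * (E' * P') = (1 - π) * (E * P) + (π - π') := by linarith
    have f2 : (1 - π') * (E' * Q') = (1 - π) * (E * Q) + (π - π') := by linarith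
    have f3 : (1 - π') * (E' * P' * Q') = (1 - π) * (E * P * Q) + (π - π') := by linarith
    have h4 : ((1 - π) * E + (π - π')) * ((1 - π) * (E * P * Q) + (π - π'))
        = ((1 - π) * (E * P) + (π - π')) * ((1 - π) * (E * Q) + (π - π')) := by
      rw [← f0, ← f1, ← f2, ← f3]
      ring
    have h5 : (π - π') * ((1 - π) * E * ((P - 1) * (Q - 1))) = 0 := by linear_combination h4
    have h6 : (1 - π) * E * ((P - 1) * (Q - 1)) ≠ 0 :=
      mul_ne_zero (mul_ne_zero hA hE) (mul_ne_zero (sub_ne_zero.2 hP) (sub_ne_zero.2 hQ))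
    exact sub_eq_zero.1 ((mul_eq_zero.1 h5).resolve_right h6)
  subst hpi
  have key2 : ∀ x : (∀ j, T j), α + ∑ j, u j (x j) = α' + ∑ j, u' j (x j) := by
    intro x
    have hA : (1 - π) ≠ 0 := by linarith [hπ.2]
    have := Real.exp_injective (mul_left_cancel₀ hA (add_left_cancel (key x)))
    linarith
  have hu : ∀ i : Fin p, ∀ t : T i, u i t = u' i t := by
    intro i
    have hd : ∀ t, u i t - u' i t = u i (x i) - u' i (x i) := by
      intro t
      have h1 := key2 (Function.update x i t)
      rw [gaet_sum_update, gaet_sum_update] at h1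
      linarith [key2 x]
    have hs : ∑ t, (u i t - u' i t) = 0 := by
      rw [Finset.sum_sub_distrib, hu_cent, hu'_cent, sub_zero]
    rw [Finset.sum_congr rfl (fun t _ => hd t), Finset.sum_const, Finset.card_univ,
      nsmul_eq_mul] at hs
    have hc : (Fintype.card (T i) : ℝ) ≠ 0 := by
      exact_mod_cast Fintype.card_ne_zero
    have h0 := (mul_eq_zero.1 hs).resolve_left hc
    intro t
    linarith [hd t]
  refine ⟨rfl, ?_, hu⟩
  have h1 := key2 x
  simp only [hu] at h1
  linarith
end

section
/- Let (Ω, μ) be a measure space, let g and h be probability densities with respect to μ (g, h ≥ 0 and ∫ g dμ = ∫ h dμ = 1), and let π ∈ (0,1). For any π* ∈ (0, π), define h*(x) = ((π − π*)/(1 − π*))·g(x) + ((1 − π)/(1 − π*))·h(x). Then: (i) h* is a probability density with respect to μ; (ii) π g(x) + (1−π) h(x) = π* g(x) + (1−π*) h*(x) for every x; and (iii) if g ≠ h on a set of positive μ-measure, then h* ≠ h on a set of positive μ-measure. Consequently the pair (π, h) is not uniquely determined by the densities g and π g + (1−π) h without further assumptions. -/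
open MeasureTheory

/-- Non-identifiability of the PU mixture model without further assumptions:
for any `π* ∈ (0, π)`, the alternative negative-class density
`h* = ((π − π*)/(1 − π*))·g + ((1 − π)/(1 − π*))·h` is a probability density
producing exactly the same mixture, and it genuinely differs from `h`
whenever `g` differs from `h` on a set of positive measure. -/
theorem pu_mixture_not_identifiable
    {Ω : Type*} [MeasurableSpace Ω] (μ : Measure Ω)
    (g h : Ω → ℝ)
    (hg_nonneg : ∀ x, 0 ≤ g x) (hh_nonneg : ∀ x, 0 ≤ h x)
    (hg_int : Integrable g μ) (hh_int : Integrable h μ)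
    (hg_one : ∫ x, g x ∂μ = 1) (hh_one : ∫ x, h x ∂μ = 1)
    (π πs : ℝ) (hπ : π ∈ Set.Ioo (0:ℝ) 1) (hπs : πs ∈ Set.Ioo (0:ℝ) π)
    (hs : Ω → ℝ)
    (hhs_def : ∀ x, hs x = ((π - πs) / (1 - πs)) * g x + ((1 - π) / (1 - πs)) * h x) :
    (∀ x, 0 ≤ hs x) ∧ (∫ x, hs x ∂μ = 1) ∧
    (∀ x, π * g x + (1 - π) * h x = πs * g x + (1 - πs) * hs x) ∧
    (0 < μ {x | g x ≠ h x} → 0 < μ {x | hs x ≠ h x}) := by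
  obtain ⟨h0, h1⟩ := hπ
  obtain ⟨h2, h3⟩ := hπs
  have hd : 0 < 1 - πs := by linarith
  have ha : 0 < (π - πs) / (1 - πs) := div_pos (by linarith) hd
  have hb : 0 < (1 - π) / (1 - πs) := div_pos (by linarith) hd
  have hab : (π - πs) / (1 - πs) + (1 - π) / (1 - πs) = 1 := by
    rw [← add_div, div_eq_one_iff_eq hd.ne']
    ring
  refine ⟨fun x => ?_, ?_, fun x => ?_, fun hpos => ?_⟩
  · rw [hhs_def]
    exact add_nonneg (mul_nonneg ha.le (hg_nonneg x)) (mul_nonneg hb.le (hh_nonneg x))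
  · simp_rw [hhs_def]
    rw [integral_add (hg_int.const_mul _) (hh_int.const_mul _), integral_const_mul,
      integral_const_mul, hg_one, hh_one, mul_one, mul_one, hab]
  · rw [hhs_def]
    have hd' := hd.ne'
    field_simp
    ring
  · refine lt_of_lt_of_le hpos (measure_mono fun x hx heq => hx ?_)
    rw [hhs_def] at heq
    have hz : (π - πs) / (1 - πs) * (g x - h x) = 0 := by
      linear_combination heq - h x * hab
    rcases mul_eq_zero.mp hz with hz | hz
    · exact absurd hz ha.ne'
    · linarith
end

section
/- Let T ⊂ ℝ be compact with positive Lebesgue measure, and let g be a measurable probability density with g > 0 on T and ∫_T g = 1. Let π ∈ (0,1), α ∈ ℝ, and let u : T → ℝ be a bounded measurable function with ∫_T u(x) dx = 0 such that h(x) := g(x)·exp(−α − u(x)) is a probability density on T. Then for every π* ∈ (0, π) there exist α* ∈ ℝ, a bounded measurable function u* : T → ℝ with ∫_T u*(x) dx = 0, and a probability density h* > 0 on T such that log(g(x)/h*(x)) = α* + u*(x) for all x ∈ T and π g(x) + (1−π) h(x) = π* g(x) + (1−π*) h*(x) for all x ∈ T. In particular, since π* ≠ π, the one-dimensional (p = 1)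 generalized additive exponential tilting model is not identifiable. -/
open MeasureTheory

/-- Non-identifiability of the one-dimensional (p = 1) generalized additive
exponential tilting model: for every `π* ∈ (0, π)` one can find parameters
`(α*, u*)` and a probability density `h*` satisfying the GAET structure and
producing exactly the same mixture density. -/
theorem gaet_p_eq_one_not_identifiable
    (T : Set ℝ) (hT_compact : IsCompact T) (hT_pos : 0 < volume T)
    (g : ℝ → ℝ) (hg_meas : Measurable g)
    (hg_pos : ∀ x ∈ T, 0 < g x)
    (hg_one : ∫ x in T, g x = 1)
    (π α : ℝ) (hπ : π ∈ Set.Ioo (0:ℝ) 1)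
    (u : ℝ → ℝ) (hu_meas : Measurable u)
    (hu_bdd : ∃ C : ℝ, ∀ x ∈ T, |u x| ≤ C)
    (hu_cent : ∫ x in T, u x = 0)
    (h : ℝ → ℝ) (hh_def : ∀ x, h x = g x * Real.exp (-α - u x))
    (hh_one : ∫ x in T, h x = 1) :
    ∀ πs ∈ Set.Ioo (0:ℝ) π, ∃ (αs : ℝ) (us hs : ℝ → ℝ),
      Measurable us ∧ (∃ C : ℝ, ∀ x ∈ T, |us x| ≤ C) ∧ (∫ x in T, us x = 0) ∧
      Measurable hs ∧ (∀ x ∈ T, 0 < hs x) ∧ (∫ x in T, hs x = 1) ∧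
      (∀ x ∈ T, Real.log (g x / hs x) = αs + us x) ∧
      (∀ x ∈ T, π * g x + (1 - π) * h x = πs * g x + (1 - πs) * hs x) := by
  intro πs hπs
  obtain ⟨hπ0, hπ1⟩ := hπ
  obtain ⟨hs0, hs1⟩ := hπs
  obtain ⟨C, hC⟩ := hu_bdd
  have hd : 0 < 1 - πs := by linarith
  have hTm : MeasurableSet T := hT_compact.measurableSet
  have hTfin : volume T ≠ ⊤ := hT_compact.measure_lt_top.ne
  have hgi : IntegrableOn g T := by
    by_contra hn
    rw [integral_undef hn] at hg_one
    exact zero_ne_one hg_one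
  have hhi : IntegrableOn h T := by
    by_contra hn
    rw [integral_undef hn] at hh_one
    exact zero_ne_one hh_one
  obtain ⟨a, ha⟩ : ∃ a, a = (π - πs) / (1 - πs) := ⟨_, rfl⟩
  obtain ⟨b, hb⟩ : ∃ b, b = (1 - π) / (1 - πs) := ⟨_, rfl⟩
  have ha0 : 0 < a := by rw [ha]; exact div_pos (by linarith) hd
  have hb0 : 0 < b := by rw [hb]; exact div_pos (by linarith) hd
  have hab : a + b = 1 := by rw [ha, hb]; field_simp; ring
  have ha' : (1 - πs) * a = π - πs := by rw [ha]; field_simp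
  have hb' : (1 - πs) * b = 1 - π := by rw [hb]; field_simp
  let k : ℝ → ℝ := fun x => a + b * Real.exp (-α - u x)
  let L : ℝ → ℝ := fun x => -Real.log (k x)
  have hkm : Measurable k := by fun_prop
  have hLm : Measurable L := by fun_prop
  have hk0 : ∀ x, 0 < k x := fun x => by positivity
  let M := max (-Real.log a) (Real.log (a + b * Real.exp (-α + C)))
  have hLb : ∀ x ∈ T, |L x| ≤ M := by
    intro x hx
    have h1 : Real.log a ≤ Real.log (k x) :=
      Real.log_le_log ha0 (le_add_of_nonneg_right (by positivity))
    have h2 : Real.log (k x) ≤ Real.log (a + b * Real.exp (-α + C)) := by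
      apply Real.log_le_log (hk0 x)
      have := (abs_le.1 (hC x hx)).1
      have h3 : Real.exp (-α - u x) ≤ Real.exp (-α + C) := Real.exp_le_exp.2 (by linarith)
      have := mul_le_mul_of_nonneg_left h3 hb0.le
      show a + b * Real.exp (-α - u x) ≤ _
      linarith
    have h4 : -Real.log a ≤ M := le_max_left _ _
    have h5 : Real.log (a + b * Real.exp (-α + C)) ≤ M := le_max_right _ _
    show |-Real.log (k x)| ≤ M
    rw [abs_neg, abs_le]
    constructor <;> linarith
  have hLi : IntegrableOn L T := by
    refine Measure.integrableOn_of_bounded hTfin hLm.aestronglyMeasurable (M := M) ?_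
    filter_upwards [ae_restrict_mem hTm] with x hx
    exact hLb x hx
  have hv : volume.real T ≠ 0 := (ENNReal.toReal_pos hT_pos.ne' hTfin).ne'
  let A : ℝ := (∫ x in T, L x) / volume.real T
  have hhs : ∀ x, g x * k x = a * g x + b * h x := fun x => by
    rw [hh_def]; show g x * (a + b * Real.exp (-α - u x)) = _; ring
  refine ⟨A, fun x => L x - A, fun x => g x * k x, by fun_prop, ⟨M + |A|, ?_⟩, ?_,
    by fun_prop, fun x hx => mul_pos (hg_pos x hx) (hk0 x), ?_, ?_, ?_⟩
  · intro x hx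
    exact (abs_sub _ _).trans (by linarith [hLb x hx])
  · rw [integral_sub hLi (integrableOn_const hTfin), setIntegral_const, smul_eq_mul]
    show (∫ x in T, L x) - volume.real T * ((∫ x in T, L x) / volume.real T) = 0
    field_simp
    ring
  · simp_rw [hhs]
    rw [integral_add (hgi.const_mul a) (hhi.const_mul b), integral_const_mul,
      integral_const_mul, hg_one, hh_one]
    linarith
  · intro x hx
    have : g x / (g x * k x) = (k x)⁻¹ := by
      have := (hg_pos x hx).ne'
      have := (hk0 x).ne'
      field_simp
    show Real.log (g x / (g x * k x)) = A + (L x - A)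
    rw [this, Real.log_inv]
    show -Real.log (k x) = A + (-Real.log (k x) - A)
    ring
  · intro x hx
    show _ = πs * g x + (1 - πs) * (g x * k x)
    rw [hhs]
    linear_combination (-g x) * ha' - h x * hb'
end

section
/- Let n ≥ 2 and let w_1, …, w_n be positive real numbers with min_i w_i < 1 < max_i w_i. Then there exists a unique real number λ such that 1 + λ(w_i − 1) > 0 for all i = 1, …, n and Σ_{i=1}^n (w_i − 1)/(1 + λ(w_i − 1)) = 0. Moreover, the function λ ↦ Σ_{i=1}^n (w_i − 1)/(1 + λ(w_i − 1)) is strictly decreasing on the open interval of λ for which all denominators 1 + λ(w_i − 1) are positive. -/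
/-- Existence and uniqueness of the empirical-likelihood Lagrange multiplier:
if the positive values `w_1, …, w_n` satisfy `min w_i < 1 < max w_i`, there is a
unique `λ` with all denominators `1 + λ(w_i − 1)` positive solving the
constraint equation; moreover the constraint function is strictly decreasing
on the set of `λ` with all denominators positive. -/
theorem el_lagrange_multiplier_exists_unique
    (n : ℕ) (hn : 2 ≤ n) (w : ℕ → ℝ)
    (hw_pos : ∀ i ∈ Finset.range n, 0 < w i)
    (hmin : ∃ i ∈ Finset.range n, w i < 1)
    (hmax : ∃ i ∈ Finset.range n, 1 < w i) :
    (∃! l : ℝ, (∀ i ∈ Finset.range n, 0 < 1 + l * (w i - 1)) ∧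
      ∑ i ∈ Finset.range n, (w i - 1) / (1 + l * (w i - 1)) = 0) ∧
    StrictAntiOn (fun l : ℝ => ∑ i ∈ Finset.range n, (w i - 1) / (1 + l * (w i - 1)))
      {l : ℝ | ∀ i ∈ Finset.range n, 0 < 1 + l * (w i - 1)} := by
  have hanti : StrictAntiOn (fun l : ℝ => ∑ i ∈ Finset.range n, (w i - 1) / (1 + l * (w i - 1)))
      {l : ℝ | ∀ i ∈ Finset.range n, 0 < 1 + l * (w i - 1)} := by
    intro l hl m hm hlm
    have key : ∀ i ∈ Finset.range n, (w i - 1) / (1 + l * (w i - 1))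
        - (w i - 1) / (1 + m * (w i - 1))
        = (w i - 1) ^ 2 * (m - l) / ((1 + l * (w i - 1)) * (1 + m * (w i - 1))) := by
      intro i hi
      rw [div_sub_div _ _ (hl i hi).ne' (hm i hi).ne']
      congr 1
      ring
    apply Finset.sum_lt_sum
    · intro i hi
      have h1 := hl i hi
      have h2 := hm i hi
      have h3 : 0 < m - l := sub_pos.2 hlm
      rw [← sub_nonneg, key i hi]
      positivity
    · obtain ⟨i, hi, h⟩ := hmax
      refine ⟨i, hi, ?_⟩
      have h1 := hl i hi
      have h2 := hm i hi
      have h3 : 0 < m - l := sub_pos.2 hlm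
      have h4 : 0 < w i - 1 := sub_pos.2 h
      rw [← sub_pos, key i hi]
      positivity
  refine ⟨?_, hanti⟩
  obtain ⟨p, hp, hp1⟩ := hmin
  obtain ⟨q, hq, hq1⟩ := hmax
  have hK : IsCompact {l : ℝ | ∀ i ∈ Finset.range n, 0 ≤ 1 + l * (w i - 1)} := by
    apply IsCompact.of_isClosed_subset
      (isCompact_Icc (a := -(1 / (w q - 1))) (b := 1 / (1 - w p)))
    · simp only [Set.ofPred_forall]
      exact isClosed_biInter fun i _ => isClosed_le continuous_const (by fun_prop)
    · intro l hl
      have h1 := hl p hp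
      have h2 := hl q hq
      constructor
      · rw [neg_le, le_div_iff₀ (by linarith)]
        linarith
      · rw [le_div_iff₀ (by linarith)]
        linarith
  obtain ⟨l, hl, hlmax⟩ := hK.exists_isMaxOn ⟨0, by simp⟩
    (f := fun l : ℝ => ∏ i ∈ Finset.range n, (1 + l * (w i - 1)))
    (Continuous.continuousOn (by fun_prop))
  have h0 : 1 ≤ ∏ i ∈ Finset.range n, (1 + l * (w i - 1)) := by
    have := hlmax (show (0 : ℝ) ∈ _ by simp)
    simpa using this
  have hpos : ∀ i ∈ Finset.range n, 0 < 1 + l * (w i - 1) := by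
    intro i hi
    refine lt_of_le_of_ne (hl i hi) fun h => ?_
    rw [Finset.prod_eq_zero hi h.symm] at h0
    linarith
  have hev : ∀ᶠ y in nhds l, ∀ i ∈ Finset.range n, 0 < 1 + y * (w i - 1) := by
    rw [Filter.eventually_all_finset]
    intro i hi
    exact (Continuous.tendsto (f := fun y : ℝ => 1 + y * (w i - 1)) (by fun_prop) l).eventually
      (lt_mem_nhds (hpos i hi))
  have hloc : IsLocalMax (fun y : ℝ => ∑ i ∈ Finset.range n, Real.log (1 + y * (w i - 1))) l := by
    filter_upwards [hev] with y hy
    rw [← Real.log_prod fun i hi => (hy i hi).ne', ← Real.log_prod fun i hi => (hpos i hi).ne']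
    exact Real.log_le_log (Finset.prod_pos hy) (hlmax fun i hi => (hy i hi).le)
  have hder : HasDerivAt (fun y : ℝ => ∑ i ∈ Finset.range n, Real.log (1 + y * (w i - 1)))
      (∑ i ∈ Finset.range n, (w i - 1) / (1 + l * (w i - 1))) l := by
    apply HasDerivAt.fun_sum
    intro i hi
    have h : HasDerivAt (fun y : ℝ => 1 + y * (w i - 1)) (w i - 1) l := by
      simpa using ((hasDerivAt_id l).mul_const (w i - 1)).const_add 1
    exact h.log (hpos i hi).ne'
  have hz := hloc.hasDerivAt_eq_zero hder
  refine ⟨l, ⟨hpos, hz⟩, ?_⟩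
  rintro m ⟨hm, hm0⟩
  exact hanti.injOn hm hpos (hm0.trans hz.symm)
end

section
/- Let n ≥ 2 and let w_1, …, w_n be positive real numbers with min_i w_i < 1 < max_i w_i. Let λ* be the unique real number satisfying 1 + λ*(w_i − 1) > 0 for all i and Σ_{i=1}^n (w_i − 1)/(1 + λ*(w_i − 1)) = 0, and set p*_i = n^{-1}·(1 + λ*(w_i − 1))^{-1} for i = 1, …, n. Then p*_i > 0 for all i, Σ_{i=1}^n p*_i = 1, Σ_{i=1}^n p*_i w_i = 1, and for every vector (p_1, …, p_n) with p_i > 0 for all i, Σ_{i=1}^n p_i = 1, and Σ_{i=1}^n p_i w_i = 1, one has Σ_{i=1}^n log p_i ≤ Σ_{i=1}^n log p*_i, with equality if and only if p_i = p*_i for all i. -/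
/-- The empirical-likelihood weights `p*_i = n⁻¹ (1 + λ*(w_i − 1))⁻¹` built from
the Lagrange multiplier `λ*` are feasible (positive, summing to one, and
satisfying the normalization `Σ p*_i w_i = 1`) and uniquely maximize
`Σ log p_i` over the feasible set. -/
theorem el_weights_maximize
    (n : ℕ) (hn : 2 ≤ n) (w : ℕ → ℝ)
    (hw_pos : ∀ i ∈ Finset.range n, 0 < w i)
    (hmin : ∃ i ∈ Finset.range n, w i < 1)
    (hmax : ∃ i ∈ Finset.range n, 1 < w i)
    (l : ℝ)
    (hl_pos : ∀ i ∈ Finset.range n, 0 < 1 + l * (w i - 1))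
    (hl_eq : ∑ i ∈ Finset.range n, (w i - 1) / (1 + l * (w i - 1)) = 0)
    (ps : ℕ → ℝ)
    (hps_def : ∀ i ∈ Finset.range n, ps i = (n : ℝ)⁻¹ * (1 + l * (w i - 1))⁻¹) :
    (∀ i ∈ Finset.range n, 0 < ps i) ∧
    (∑ i ∈ Finset.range n, ps i = 1) ∧
    (∑ i ∈ Finset.range n, ps i * w i = 1) ∧
    (∀ q : ℕ → ℝ, (∀ i ∈ Finset.range n, 0 < q i) →
      (∑ i ∈ Finset.range n, q i = 1) → (∑ i ∈ Finset.range n, q i * w i = 1) →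
      (∑ i ∈ Finset.range n, Real.log (q i) ≤ ∑ i ∈ Finset.range n, Real.log (ps i)) ∧
      ((∑ i ∈ Finset.range n, Real.log (q i) = ∑ i ∈ Finset.range n, Real.log (ps i)) ↔
        ∀ i ∈ Finset.range n, q i = ps i)) := by
  have hn0 : (n : ℝ) ≠ 0 := by
    have : n ≠ 0 := by omega
    exact_mod_cast this
  have hnpos : (0 : ℝ) < n := by positivity
  have hpos : ∀ i ∈ Finset.range n, 0 < ps i := by
    intro i hi
    rw [hps_def i hi]
    have := hl_pos i hi
    positivity
  have hsum : ∑ i ∈ Finset.range n, ps i = 1 := by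
    have h : ∀ i ∈ Finset.range n,
        ps i = (n : ℝ)⁻¹ - (n : ℝ)⁻¹ * l * ((w i - 1) / (1 + l * (w i - 1))) := by
      intro i hi
      rw [hps_def i hi]
      have := (hl_pos i hi).ne'
      field_simp
      ring
    rw [Finset.sum_congr rfl h, Finset.sum_sub_distrib, ← Finset.mul_sum, hl_eq]
    simp [hn0]
  have hsumw : ∑ i ∈ Finset.range n, ps i * w i = 1 := by
    have h : ∀ i ∈ Finset.range n,
        ps i * w i = ps i + (n : ℝ)⁻¹ * ((w i - 1) / (1 + l * (w i - 1))) := by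
      intro i hi
      rw [hps_def i hi, div_eq_mul_inv]
      ring
    rw [Finset.sum_congr rfl h, Finset.sum_add_distrib, ← Finset.mul_sum, hl_eq, hsum]
    simp
  refine ⟨hpos, hsum, hsumw, ?_⟩
  intro q hq hq1 hqw
  have hratio : ∀ i ∈ Finset.range n, q i / ps i = n * (q i + l * (q i * w i - q i)) := by
    intro i hi
    rw [hps_def i hi]
    have := (hl_pos i hi).ne'
    field_simp
  have hrs : ∑ i ∈ Finset.range n, (q i / ps i - 1) = 0 := by
    rw [Finset.sum_sub_distrib, Finset.sum_congr rfl hratio, ← Finset.mul_sum,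
      Finset.sum_add_distrib, ← Finset.mul_sum, Finset.sum_sub_distrib, hq1, hqw]
    simp
  have hterm : ∀ i ∈ Finset.range n, Real.log (q i) ≤ Real.log (ps i) + (q i / ps i - 1) := by
    intro i hi
    have h := Real.log_le_sub_one_of_pos (div_pos (hq i hi) (hpos i hi))
    rw [Real.log_div (hq i hi).ne' (hpos i hi).ne'] at h
    linarith
  have hRS : ∑ i ∈ Finset.range n, (Real.log (ps i) + (q i / ps i - 1))
      = ∑ i ∈ Finset.range n, Real.log (ps i) := by
    rw [Finset.sum_add_distrib, hrs, add_zero]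
  refine ⟨hRS ▸ Finset.sum_le_sum hterm, ?_, ?_⟩
  · intro heq i hi
    rw [← hRS] at heq
    have h := (Finset.sum_eq_sum_iff_of_le hterm).1 heq i hi
    by_contra hne
    have h1 : q i / ps i ≠ 1 := by
      intro h1
      exact hne ((div_eq_one_iff_eq (hpos i hi).ne').1 h1)
    have h2 := Real.log_lt_sub_one_of_pos (div_pos (hq i hi) (hpos i hi)) h1
    rw [Real.log_div (hq i hi).ne' (hpos i hi).ne'] at h2
    linarith
  · intro h
    exact Finset.sum_congr rfl fun i hi => by rw [h i hi]
end

section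
/- Let n_0, n_1 ≥ 1 be integers, n = n_0 + n_1, π ∈ (0,1), α ∈ ℝ, and η_1, …, η_n ∈ ℝ. Set w_i = exp(α + η_i), λ̃ = (n_0 + n_1 π)/n, τ = log((1−π)/π), and E_i = exp(α + η_i − τ). Then 1 + λ̃(w_i − 1) > 0 for every i, and −Σ_{i=1}^n log(1 + λ̃(w_i − 1)) + Σ_{i=1}^{n_0} log w_i + Σ_{i=n_0+1}^n log(π w_i + 1 − π) = ℓ_n(π, α, η) + n_0·log(n/n_0) + n_1·log(n/n_1), where ℓ_n(π, α, η) = Σ_{i=1}^{n_0} log[n_0 E_i / (n_1 π + (n_0 + n_1 π) E_i)] + Σ_{i=n_0+1}^{n} log[(n_1 π + n_1 π E_i)/(n_1 π + (n_0 + n_1 π) E_i)]. -/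
/-- Substituting the maximizing Lagrange multiplier `λ̃ = (n₀ + n₁π)/n` into the
empirical log-likelihood yields the profile log-likelihood `ℓ_n(π, α, η)` up to
the constant `n₀ log(n/n₀) + n₁ log(n/n₁)`; moreover all the quantities
`1 + λ̃(w_i − 1)` are positive. -/
theorem el_profile_loglik_identity
    (n0 n1 : ℕ) (hn0 : 1 ≤ n0) (hn1 : 1 ≤ n1) (n : ℕ) (hn : n = n0 + n1)
    (pi0 : ℝ) (hpi : pi0 ∈ Set.Ioo (0:ℝ) 1) (α : ℝ) (η : ℕ → ℝ)
    (w : ℕ → ℝ) (hw : ∀ i, w i = Real.exp (α + η i))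
    (lam : ℝ) (hlam : lam = ((n0 : ℝ) + (n1 : ℝ) * pi0) / (n : ℝ))
    (τ : ℝ) (hτ : τ = Real.log ((1 - pi0) / pi0))
    (E : ℕ → ℝ) (hE : ∀ i, E i = Real.exp (α + η i - τ)) :
    (∀ i, 0 < 1 + lam * (w i - 1)) ∧
    (- ∑ i ∈ Finset.range n, Real.log (1 + lam * (w i - 1))
      + ∑ i ∈ Finset.range n0, Real.log (w i)
      + ∑ i ∈ Finset.Ico n0 n, Real.log (pi0 * w i + 1 - pi0)
      = (∑ i ∈ Finset.range n0,
          Real.log ((n0 : ℝ) * E i / ((n1 : ℝ) * pi0 + ((n0 : ℝ) + (n1 : ℝ) * pi0) * E i))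
        + ∑ i ∈ Finset.Ico n0 n,
          Real.log (((n1 : ℝ) * pi0 + (n1 : ℝ) * pi0 * E i)
            / ((n1 : ℝ) * pi0 + ((n0 : ℝ) + (n1 : ℝ) * pi0) * E i)))
        + (n0 : ℝ) * Real.log ((n : ℝ) / (n0 : ℝ))
        + (n1 : ℝ) * Real.log ((n : ℝ) / (n1 : ℝ))) := by
  obtain ⟨hp0, hp1⟩ := hpi
  have hq : 0 < 1 - pi0 := by linarith
  have a0 : (0:ℝ) < n0 := by exact_mod_cast hn0
  have a1 : (0:ℝ) < n1 := by exact_mod_cast hn1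
  have hnc : (n:ℝ) = n0 + n1 := by rw [hn]; push_cast; rfl
  have an : (0:ℝ) < n := by rw [hnc]; positivity
  have wpos : ∀ i, 0 < w i := fun i => by rw [hw]; exact Real.exp_pos _
  have hEw : ∀ i, E i = pi0 / (1 - pi0) * w i := by
    intro i
    rw [hE, hw, Real.exp_sub, hτ, Real.exp_log (by positivity)]
    field_simp
  have hA : ∀ i, 1 + lam * (w i - 1)
      = ((n1:ℝ) * (1 - pi0) + ((n0:ℝ) + n1 * pi0) * w i) / n := by
    intro i
    rw [hlam, eq_div_iff an.ne']
    field_simp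
    rw [hnc]
    ring
  have hApos : ∀ i, 0 < 1 + lam * (w i - 1) := by
    intro i
    have := wpos i
    rw [hA]
    positivity
  have hD : ∀ i, (n1 : ℝ) * pi0 + ((n0 : ℝ) + (n1 : ℝ) * pi0) * E i
      = pi0 / (1 - pi0) * (n * (1 + lam * (w i - 1))) := by
    intro i
    rw [hA, hEw]
    field_simp
  have hB : ∀ i, 0 < pi0 * w i + 1 - pi0 := by
    intro i
    have := mul_pos hp0 (wpos i)
    linarith
  have h1 : ∀ i, Real.log ((n0 : ℝ) * E i / ((n1 : ℝ) * pi0 + ((n0 : ℝ) + (n1 : ℝ) * pi0) * E i))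
      = Real.log (w i) - Real.log (1 + lam * (w i - 1)) - Real.log ((n:ℝ) / n0) := by
    intro i
    have hAi := hApos i
    have hwi := wpos i
    rw [hD, hEw, ← Real.log_div hwi.ne' hAi.ne', ← Real.log_div (by positivity) (by positivity)]
    congr 1
    generalize 1 + lam * (w i - 1) = A at *
    field_simp
  have h2 : ∀ i, Real.log (((n1 : ℝ) * pi0 + (n1 : ℝ) * pi0 * E i)
            / ((n1 : ℝ) * pi0 + ((n0 : ℝ) + (n1 : ℝ) * pi0) * E i))
      = Real.log (pi0 * w i + 1 - pi0) - Real.log (1 + lam * (w i - 1))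
        - Real.log ((n:ℝ) / n1) := by
    intro i
    have hAi := hApos i
    have hBi := hB i
    rw [hD, hEw, ← Real.log_div hBi.ne' hAi.ne', ← Real.log_div (by positivity) (by positivity)]
    congr 1
    generalize 1 + lam * (w i - 1) = A at *
    field_simp
    ring
  refine ⟨hApos, ?_⟩
  have hle : n0 ≤ n := by omega
  have hsub : n - n0 = n1 := by omega
  rw [← Finset.sum_range_add_sum_Ico _ hle]
  simp only [h1, h2, Finset.sum_sub_distrib, Finset.sum_const, Finset.card_range, Nat.card_Ico,
    hsub, nsmul_eq_mul]
  ring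
end
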